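/- Let i, j, k be natural numbers and let L and L′ be split-invariant ℂ-subspaces of ℂ^i × ℂ^j, both of dimension k. Then there exist unitary operators A of ℂ^i and B of ℂ^j with (A × B)(L) = L′ if and only if dim_ℂ(L ∩ (ℂ^i × {0})) = dim_ℂ(L′ ∩ (ℂ^i × {0})). -/

import Mathlib

/-!
Half the difference and half the sum of `(x, y)` and `(-x, y)` are `(x, 0)` and `(0, y)`, so a
split-invariant subspace is a product `P × Q`, and two of them lie in one orbit exactly when their
factors do, separately in `ℂ^i` and in `ℂ^j`. The unitary group is transitive on the subspaces of
each dimension, which leaves `dim P` and `dim Q` as invariants. Here `dim P` is the dimension of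
the intersection with `ℂ^i × 0`, and `dim Q` is what remains of the total dimension.
-/

section Prod

variable {R M N : Type*} [Semiring R]
  [AddCommMonoid M] [Module R M] [AddCommMonoid N] [Module R N]

theorem submodule_prod_inj {P P' : Submodule R M} {Q Q' : Submodule R N} :
    P.prod Q = P'.prod Q' ↔ P = P' ∧ Q = Q' := by
  refine ⟨fun h => ⟨?_, ?_⟩, fun ⟨hP, hQ⟩ => hP ▸ hQ ▸ rfl⟩
  · simpa only [Submodule.prod_map_fst] using congrArg (Submodule.map (LinearMap.fst R M N)) h
  · simpa only [Submodule.prod_map_snd] using congrArg (Submodule.map (LinearMap.snd R M N)) h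

theorem finrank_submodule_prod [StrongRankCondition R] (P : Submodule R M) (Q : Submodule R N)
    [Module.Free R P] [Module.Finite R P] [Module.Free R Q] [Module.Finite R Q] :
    Module.finrank R (P.prod Q) = Module.finrank R P + Module.finrank R Q := by
  have hrange : (P.subtype.prodMap Q.subtype).range = P.prod Q := by
    rw [LinearMap.range_prodMap, Submodule.range_subtype, Submodule.range_subtype]
  have hinj : Function.Injective (P.subtype.prodMap Q.subtype) :=
    P.injective_subtype.prodMap Q.injective_subtype
  rw [← hrange, LinearMap.finrank_range_of_inj hinj, Module.finrank_prod]

theorem finrank_inf_prod_top_bot (L : Submodule R (M × N)) :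
    Module.finrank R (L ⊓ Submodule.prod ⊤ ⊥ : Submodule R (M × N)) =
      Module.finrank R (L.comap (LinearMap.inl R M N)) := by
  have hmap : (L.comap (LinearMap.inl R M N)).map (LinearMap.inl R M N) =
      L ⊓ Submodule.prod ⊤ ⊥ := by
    rw [Submodule.map_comap_eq, LinearMap.range_eq_map, Submodule.map_inl, inf_comm]
  rw [← hmap]
  exact (Submodule.equivMapOfInjective _ LinearMap.inl_injective _).finrank_eq.symm

end Prod

section SplitInvariant

variable {R M N : Type*} [Ring R] [AddCommGroup M] [Module R M] [AddCommGroup N] [Module R N]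

/-- A submodule of `M × N` is split-invariant if the reflection `(x, y) ↦ (-x, y)` maps it into
itself. Membership is quantified over the two coordinates rather than stated as an inclusion of
a mapped submodule. -/
def IsSplitInvariant (L : Submodule R (M × N)) : Prop :=
  ∀ (x : M) (y : N), (x, y) ∈ L → (-x, y) ∈ L

namespace IsSplitInvariant

variable [Invertible (2 : R)] {L : Submodule R (M × N)} {x : M} {y : N}

theorem inl_mem (hL : IsSplitInvariant L) (hxy : (x, y) ∈ L) : (x, 0) ∈ L := by
  have hdiff : (2 : R) • (x, (0 : N)) = (x, y) - (-x, y) := by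
    simp [two_smul]
  rw [← L.smul_mem_iff'' (r := (2 : R)), hdiff]
  exact L.sub_mem hxy (hL x y hxy)

theorem inr_mem (hL : IsSplitInvariant L) (hxy : (x, y) ∈ L) : (0, y) ∈ L := by
  simpa only [Prod.mk_sub_mk, sub_self, sub_zero] using L.sub_mem hxy (hL.inl_mem hxy)

theorem exists_eq_prod (hL : IsSplitInvariant L) :
    ∃ (P : Submodule R M) (Q : Submodule R N), L = P.prod Q := by
  refine ⟨L.comap (LinearMap.inl R M N), L.comap (LinearMap.inr R M N), ?_⟩
  ext ⟨x, y⟩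
  refine ⟨fun hxy => ⟨hL.inl_mem hxy, hL.inr_mem hxy⟩, fun ⟨hx, hy⟩ => ?_⟩
  simpa using L.add_mem hx hy

end IsSplitInvariant

end SplitInvariant

section InnerProductSpace

variable {𝕜 E F : Type*} [RCLike 𝕜]
  [NormedAddCommGroup E] [InnerProductSpace 𝕜 E] [FiniteDimensional 𝕜 E]
  [NormedAddCommGroup F] [InnerProductSpace 𝕜 F] [FiniteDimensional 𝕜 F]

theorem exists_linearIsometryEquiv_map_eq {P P' : Submodule 𝕜 E}
    (h : Module.finrank 𝕜 P = Module.finrank 𝕜 P') :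
    ∃ A : E ≃ₗᵢ[𝕜] E, P.map A.toLinearEquiv.toLinearMap = P' := by
  let e : P ≃ₗᵢ[𝕜] P' := (stdOrthonormalBasis 𝕜 P).equiv (stdOrthonormalBasis 𝕜 P') (finCongr h)
  let f : P →ₗᵢ[𝕜] E := P'.subtypeₗᵢ.comp e.toLinearIsometry
  let A : E ≃ₗᵢ[𝕜] E := f.extend.toLinearIsometryEquiv rfl
  have hA : A.toLinearEquiv.toLinearMap ∘ₗ P.subtype =
      P'.subtype ∘ₗ e.toLinearEquiv.toLinearMap := LinearMap.ext f.extend_apply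
  refine ⟨A, ?_⟩
  calc P.map A.toLinearEquiv.toLinearMap
      = (A.toLinearEquiv.toLinearMap ∘ₗ P.subtype).range := by
        rw [LinearMap.range_comp, Submodule.range_subtype]
    _ = (P'.subtype ∘ₗ e.toLinearEquiv.toLinearMap).range := by rw [hA]
    _ = P' := by rw [LinearEquiv.range_comp, Submodule.range_subtype]

theorem exists_linearIsometryEquiv_map_eq_iff {P P' : Submodule 𝕜 E} :
    (∃ A : E ≃ₗᵢ[𝕜] E, P.map A.toLinearEquiv.toLinearMap = P') ↔
      Module.finrank 𝕜 P = Module.finrank 𝕜 P' := by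
  refine ⟨?_, exists_linearIsometryEquiv_map_eq⟩
  rintro ⟨A, rfl⟩
  exact (A.toLinearEquiv.finrank_map_eq P).symm

theorem split_invariant_orbit_iff_general {L L' : Submodule 𝕜 (E × F)}
    (hL : IsSplitInvariant L) (hL' : IsSplitInvariant L')
    (hdim : Module.finrank 𝕜 L = Module.finrank 𝕜 L') :
    (∃ (A : E ≃ₗᵢ[𝕜] E) (B : F ≃ₗᵢ[𝕜] F),
        L.map (A.toLinearEquiv.toLinearMap.prodMap B.toLinearEquiv.toLinearMap) = L') ↔
      Module.finrank 𝕜 (L ⊓ Submodule.prod ⊤ ⊥ : Submodule 𝕜 (E × F)) =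
        Module.finrank 𝕜 (L' ⊓ Submodule.prod ⊤ ⊥ : Submodule 𝕜 (E × F)) := by
  obtain ⟨P, Q, rfl⟩ := hL.exists_eq_prod
  obtain ⟨P', Q', rfl⟩ := hL'.exists_eq_prod
  rw [finrank_submodule_prod, finrank_submodule_prod] at hdim
  have horbit : (∃ (A : E ≃ₗᵢ[𝕜] E) (B : F ≃ₗᵢ[𝕜] F), (P.prod Q).map
      (A.toLinearEquiv.toLinearMap.prodMap B.toLinearEquiv.toLinearMap) = P'.prod Q') ↔
      Module.finrank 𝕜 P = Module.finrank 𝕜 P' ∧ Module.finrank 𝕜 Q = Module.finrank 𝕜 Q' := by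
    simp only [LinearMap.prodMap_map_prod, submodule_prod_inj, exists_and_left, exists_and_right,
      exists_linearIsometryEquiv_map_eq_iff]
  rw [horbit, finrank_inf_prod_top_bot, finrank_inf_prod_top_bot, Submodule.prod_comap_inl,
    Submodule.prod_comap_inl]
  omega

end InnerProductSpace

/-- Two split-invariant ℂ-subspaces `L`, `L'` of `ℂ^i × ℂ^j`, both of
dimension `k`, lie in the same orbit of `U(i) × U(j)` (acting by products `A × B` of
unitary operators of the factors) if and only if
`dim (L ∩ (ℂ^i × 0)) = dim (L' ∩ (ℂ^i × 0))`. -/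
theorem split_invariant_orbit_iff (i j k : ℕ)
    (L L' : Submodule ℂ (EuclideanSpace ℂ (Fin i) × EuclideanSpace ℂ (Fin j)))
    (hsplit : ∀ (x : EuclideanSpace ℂ (Fin i)) (y : EuclideanSpace ℂ (Fin j)),
        (x, y) ∈ L → (-x, y) ∈ L)
    (hsplit' : ∀ (x : EuclideanSpace ℂ (Fin i)) (y : EuclideanSpace ℂ (Fin j)),
        (x, y) ∈ L' → (-x, y) ∈ L')
    (hdim : Module.finrank ℂ L = k) (hdim' : Module.finrank ℂ L' = k) :
    (∃ (A : EuclideanSpace ℂ (Fin i) ≃ₗᵢ[ℂ] EuclideanSpace ℂ (Fin i))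
       (B : EuclideanSpace ℂ (Fin j) ≃ₗᵢ[ℂ] EuclideanSpace ℂ (Fin j)),
        Submodule.map
            (LinearMap.prodMap A.toLinearEquiv.toLinearMap B.toLinearEquiv.toLinearMap) L = L') ↔
      Module.finrank ℂ
          (L ⊓ Submodule.prod (⊤ : Submodule ℂ (EuclideanSpace ℂ (Fin i)))
              (⊥ : Submodule ℂ (EuclideanSpace ℂ (Fin j))) :
            Submodule ℂ (EuclideanSpace ℂ (Fin i) × EuclideanSpace ℂ (Fin j))) =
        Module.finrank ℂ
          (L' ⊓ Submodule.prod (⊤ : Submodule ℂ (EuclideanSpace ℂ (Fin i)))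
              (⊥ : Submodule ℂ (EuclideanSpace ℂ (Fin j))) :
            Submodule ℂ (EuclideanSpace ℂ (Fin i) × EuclideanSpace ℂ (Fin j))) := by
  exact split_invariant_orbit_iff_general hsplit hsplit' (hdim.trans hdim'.symm)
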